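/- Let T ⊆ 𝔹 and let 𝔹_𝔭 be an orbit with T_𝔭 ≠ 𝔹_𝔭 and T̃_𝔭 = 𝔹_𝔭. Write T̃_𝔭 − T_𝔭 = {β₁, …, β_r} and set T′ = T ∪ {β₁}. Then every κ ∈ 𝒟_{T′} + ℚ^{≥0}·h_{β₁} satisfying L_{T,β_i}(κ) ≥ 0 for all 1 ≤ i ≤ r lies in 𝒟_T. -/

import Mathlib

/- Setting: `B` is the finite nonempty set 𝔹 equipped with a permutation `σ` (Frobenius),
and `p` is a prime.  Weights live in `ℚ^𝔹 = (B → ℚ)`.  The orbits `𝔹_𝔭` of `σ` are the sets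
`orbit σ β`, and for `T ⊆ 𝔹` we have `T_𝔭 = T ∩ orbit σ β`. -/

open scoped Classical

noncomputable section

namespace GO

variable {B : Type*} [Fintype B] [DecidableEq B]

/-- The standard basis vector `e_β` of `ℚ^𝔹`. -/
def e (β : B) : B → ℚ := fun τ => if τ = β then 1 else 0

/-- `β'` lies in the `σ`-orbit of `β`. -/
def sameOrbit (σ : Equiv.Perm B) (β β' : B) : Prop := ∃ n : ℕ, (σ ^ n) β = β'

/-- The `σ`-orbit `𝔹_𝔭` of `β`. -/
def orbit (σ : Equiv.Perm B) (β : B) : Set B := {τ | sameOrbit σ β τ}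

/-- `|𝔹_𝔭|`, the cardinality of the orbit of `β`. -/
def orbitCard (σ : Equiv.Perm B) (β : B) : ℕ := (orbit σ β).ncard

/-- For `β`, `β'` in the same orbit: the unique `n` with `0 < n ≤ |𝔹_𝔭|` and `σ^n β' = β`,
realized as the least positive `n` with `σ^n β' = β`. -/
def steps (σ : Equiv.Perm B) (β' β : B) : ℕ := sInf {n : ℕ | 0 < n ∧ (σ ^ n) β' = β}

/-- For `β`, `β'` in the same orbit: the unique `n` with `0 ≤ n < |𝔹_𝔭|` and `σ^n β = β'`. -/
def steps0 (σ : Equiv.Perm B) (β β' : B) : ℕ := sInf {n : ℕ | (σ ^ n) β = β'}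

/-- `h_β^{β'} = -e_β + p^n e_{β'}` where `β = σ^n β'` with `0 < n ≤ |𝔹_𝔭|`. -/
def hvec (σ : Equiv.Perm B) (p : ℕ) (β β' : B) : B → ℚ :=
  -(e β) + ((p : ℚ) ^ steps σ β' β) • e β'

/-- `b_β^{β'} = e_β + p^n e_{β'}` where `β = σ^n β'` with `0 < n ≤ |𝔹_𝔭|`. -/
def bvec (σ : Equiv.Perm B) (p : ℕ) (β β' : B) : B → ℚ :=
  (e β) + ((p : ℚ) ^ steps σ β' β) • e β'

/-- `h_β = -e_β + p e_{σ⁻¹ β}`. -/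
def hsimple (σ : Equiv.Perm B) (p : ℕ) (β : B) : B → ℚ := -(e β) + (p : ℚ) • e (σ⁻¹ β)

/-- `b_β = e_β + p e_{σ⁻¹ β}`. -/
def bsimple (σ : Equiv.Perm B) (p : ℕ) (β : B) : B → ℚ := (e β) + (p : ℚ) • e (σ⁻¹ β)

/-- The `ℚ^{≥0}`-cone generated by a set `S` of vectors: all finite nonnegative rational
linear combinations of elements of `S`. -/
def cone {V : Type*} [AddCommMonoid V] [Module ℚ V] (S : Set V) : Set V :=
  {x | ∃ (n : ℕ) (c : Fin n → ℚ) (v : Fin n → V),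
    (∀ i, 0 ≤ c i) ∧ (∀ i, v i ∈ S) ∧ x = ∑ i, c i • v i}

/-- A chain in `T` (automatically contained in a single orbit, so this is the notion of a
chain in `T_𝔭` for `T_𝔭 ⊊ 𝔹_𝔭`): `C = {σ^{-i}β : 0 ≤ i ≤ m} ⊆ T` with `σβ ∉ T` and
`σ^{-m-1}β ∉ T`. -/
def IsChainIn (σ : Equiv.Perm B) (T : Set B) (C : Set B) : Prop :=
  ∃ (β : B) (m : ℕ), σ β ∉ T ∧ (σ⁻¹ ^ (m + 1)) β ∉ T ∧
    (∀ i ≤ m, (σ⁻¹ ^ i) β ∈ T) ∧ C = {τ | ∃ i ≤ m, τ = (σ⁻¹ ^ i) β}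

/-- `C̃` for a chain `C`: equals `C` if `m` is odd (i.e. `|C| = m+1` is even), and
`C ∪ {σ^{-m-1}β} = C ∪ σ⁻¹(C)` if `m` is even (i.e. `|C|` odd). -/
def chainExt (σ : Equiv.Perm B) (C : Set B) : Set B :=
  if Odd C.ncard then C ∪ (⇑σ⁻¹ '' C) else C

/-- `T̃ = ⋃_𝔭 T̃_𝔭`: the union of `T` with the extensions `C̃` of all chains `C` in `T`.
(For orbits with `T_𝔭 = 𝔹_𝔭` there are no chains and `T̃_𝔭 = 𝔹_𝔭 = T_𝔭`.) -/
def tilde (σ : Equiv.Perm B) (T : Set B) : Set B :=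
  T ∪ ⋃ (C : Set B) (_ : IsChainIn σ T C), chainExt σ C

/-- `μ_β`: the least `i > 0` with `σ^i β ∉ T` if `T_𝔭 ≠ 𝔹_𝔭`, and `0` if `T_𝔭 = 𝔹_𝔭`. -/
def mu (σ : Equiv.Perm B) (T : Set B) (β : B) : ℕ :=
  if orbit σ β ⊆ T then 0 else sInf {i : ℕ | 0 < i ∧ (σ ^ i) β ∉ T}

/-- `n_β`: the least `i > 0` with `σ^i β ∉ T̃` (meaningful when `T̃_𝔭 ≠ 𝔹_𝔭`). -/
def nn (σ : Equiv.Perm B) (T : Set B) (β : B) : ℕ :=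
  sInf {i : ℕ | 0 < i ∧ (σ ^ i) β ∉ tilde σ T}

/-- `ν_β`: the least `i ≥ 0` with `σ^{-i} β ∉ T` (meaningful when `T_𝔭 ≠ 𝔹_𝔭`). -/
def nu (σ : Equiv.Perm B) (T : Set B) (β : B) : ℕ :=
  sInf {i : ℕ | (σ⁻¹ ^ i) β ∉ T}

/-- `𝒯(T_𝔭) = (𝔹_𝔭 − T̃_𝔭) ∪ σ(T̃_𝔭 − T_𝔭)`, taken globally (union over all `𝔭`). -/
def Tscr (σ : Equiv.Perm B) (T : Set B) : Set B :=
  (tilde σ T)ᶜ ∪ (⇑σ '' (tilde σ T \ T))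

/-- The generating set `⋃_𝔭 𝒢(T_𝔭)`:
`{h_β^{β'} : β ∈ ℋ(T_𝔭), β' ∈ 𝒯(T_𝔭)} ∪ {±b_β : β ∈ T_𝔭}` over all `𝔭`. -/
def Dgen (σ : Equiv.Perm B) (p : ℕ) (T : Set B) : Set (B → ℚ) :=
  {v | ∃ β β', β ∉ T ∧ β' ∈ Tscr σ T ∧ sameOrbit σ β β' ∧ v = hvec σ p β β'}
  ∪ {v | ∃ β ∈ T, v = bsimple σ p β ∨ v = -(bsimple σ p β)}

/-- The cone `𝒟_T`. -/
def D (σ : Equiv.Perm B) (p : ℕ) (T : Set B) : Set (B → ℚ) := cone (Dgen σ p T)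

/-- `h_{σ^{n_β}β}^{β} = -e_{σ^{n_β}β} + p^{n_β} e_β`. -/
def fH (σ : Equiv.Perm B) (p : ℕ) (T : Set B) (β : B) : B → ℚ :=
  -(e ((σ ^ nn σ T β) β)) + ((p : ℚ) ^ nn σ T β) • e β

/-- `b_{σ^{n_β}β}^{β} = e_{σ^{n_β}β} + p^{n_β} e_β`. -/
def fB (σ : Equiv.Perm B) (p : ℕ) (T : Set B) (β : B) : B → ℚ :=
  (e ((σ ^ nn σ T β) β)) + ((p : ℚ) ^ nn σ T β) • e β

/-- The generating set `⋃_𝔭 𝒢′(T_𝔭)`: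
if `𝔹_𝔭 − T̃_𝔭 ≠ ∅` it is `{h_{σ^{n_β}β}^β : β ∈ 𝔹_𝔭 − T̃_𝔭} ∪ {−b_{σ^{n_β}β}^β : β ∈ T̃_𝔭 − T_𝔭}
∪ {±b_β : β ∈ T_𝔭}`, and if `𝔹_𝔭 = T̃_𝔭` it is `{−e_β : β ∈ 𝔹_𝔭 − T_𝔭} ∪ {±b_β : β ∈ T_𝔭}`. -/
def D'gen (σ : Equiv.Perm B) (p : ℕ) (T : Set B) : Set (B → ℚ) :=
  {v | ∃ β, β ∉ tilde σ T ∧ v = fH σ p T β}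
  ∪ {v | ∃ β, β ∈ tilde σ T ∧ β ∉ T ∧ ¬ orbit σ β ⊆ tilde σ T ∧ v = -(fB σ p T β)}
  ∪ {v | ∃ β, β ∉ T ∧ orbit σ β ⊆ tilde σ T ∧ v = -(e β)}
  ∪ {v | ∃ β ∈ T, v = bsimple σ p β ∨ v = -(bsimple σ p β)}

/-- The cone `𝒟′_T`. -/
def D' (σ : Equiv.Perm B) (p : ℕ) (T : Set B) : Set (B → ℚ) := cone (D'gen σ p T)

/-- `f_β(T)` for `β ∉ T`: `h_{σ^{n_β}β}^β` if `β ∈ 𝔹_𝔭 − T̃_𝔭`; `−b_{σ^{n_β}β}^β` if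
`β ∈ T̃_𝔭 − T_𝔭` and `𝔹_𝔭 ≠ T̃_𝔭`; and `−(1+p^{|𝔹_𝔭|}) e_β` if `𝔹_𝔭 = T̃_𝔭`. -/
def fvec (σ : Equiv.Perm B) (p : ℕ) (T : Set B) (β : B) : B → ℚ :=
  if orbit σ β ⊆ tilde σ T then -((1 + (p : ℚ) ^ orbitCard σ β) • e β)
  else if β ∈ tilde σ T then -(fB σ p T β) else fH σ p T β

/-- `𝔹(T) = ⋃_𝔭 𝔹_𝔭(T)`: `β ∈ 𝔹(T)` iff `β ∉ T`, the set `𝔹_𝔭 − T̃_𝔭` is nonempty, and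
`𝔹_𝔭 − T̃_𝔭 ≠ {β}` (this encodes all three cases of the definition of `𝔹_𝔭(T)`). -/
def BT (σ : Equiv.Perm B) (T : Set B) : Set B :=
  {β | β ∉ T ∧ (orbit σ β \ tilde σ T).Nonempty ∧ orbit σ β \ tilde σ T ≠ {β}}

/-- The sign function `ε_T : 𝔹 → {−1,0,1}`. -/
def epsT (σ : Equiv.Perm B) (T : Set B) (β : B) : ℚ :=
  if orbit σ β ⊆ T then 0
  else if β ∈ tilde σ T then (-1 : ℚ) ^ (mu σ T β - 1) else 1

/-- `L^ε[β, β'](κ) = Σ_{0 ≤ i ≤ n} ε(σ^iβ) p^i k_{σ^iβ}`, where `β' = σ^n β` with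
`0 ≤ n < |𝔹_𝔭|`. -/
def Lfun (σ : Equiv.Perm B) (p : ℕ) (ε : B → ℚ) (β β' : B) (κ : B → ℚ) : ℚ :=
  ∑ i ∈ Finset.range (steps0 σ β β' + 1), ε ((σ ^ i) β) * (p : ℚ) ^ i * κ ((σ ^ i) β)

/-- `L^ε[β] = L^ε[β, σ⁻¹β]`. -/
def Lfun1 (σ : Equiv.Perm B) (p : ℕ) (ε : B → ℚ) (β : B) (κ : B → ℚ) : ℚ :=
  Lfun σ p ε β (σ⁻¹ β) κ

/-- `L_{T,β}` for `β ∈ 𝔹 − T`: `L^{ε_T}[σ^{μ_β}β]` if `β ∈ 𝔹 − T̃`, and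
`L^{ε_T}[β, σ^{μ_β−1}β]` if `β ∈ T̃ − T`. -/
def LT (σ : Equiv.Perm B) (p : ℕ) (T : Set B) (β : B) (κ : B → ℚ) : ℚ :=
  if β ∈ tilde σ T then Lfun σ p (epsT σ T) β ((σ ^ (mu σ T β - 1)) β) κ
  else Lfun1 σ p (epsT σ T) ((σ ^ mu σ T β) β) κ

/-- `ε_{T,f_β}`: negates `ε_T` on `{β, σβ, …, σ^{μ_β−1}β}`. -/
def epsTf (σ : Equiv.Perm B) (T : Set B) (β τ : B) : ℚ :=
  if ∃ i < mu σ T β, τ = (σ ^ i) β then -(epsT σ T τ) else epsT σ T τ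

/-- `L_{T,f_β,τ}` for `β ∈ 𝔹(T)` and `τ ∈ 𝔹 − (T ∪ {σ^{n_β}β})`, with `β′ = σ^{n_β}β` and
`β̃ = σ^{μ_{β′}}β′`. -/
def LTf (σ : Equiv.Perm B) (p : ℕ) (T : Set B) (β τ : B) (κ : B → ℚ) : ℚ :=
  if τ = β then
    (if β ∈ tilde σ T then
      Lfun1 σ p (epsTf σ T β) ((σ ^ mu σ T ((σ ^ nn σ T β) β)) ((σ ^ nn σ T β) β)) κ
    else
      Lfun σ p (epsTf σ T β) β (σ⁻¹ ((σ ^ mu σ T ((σ ^ nn σ T β) β)) ((σ ^ nn σ T β) β))) κ)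
  else
    (if τ ∈ tilde σ T then LT σ p T τ κ
     else Lfun1 σ p (epsTf σ T β) ((σ ^ mu σ T τ) τ) κ)

/-- `𝒟_{T,f_β} = {κ : L_{T,f_β,τ}(κ) ≥ 0 for all τ ∈ 𝔹 − (T ∪ {σ^{n_β}β})}`. -/
def Df (σ : Equiv.Perm B) (p : ℕ) (T : Set B) (β : B) : Set (B → ℚ) :=
  {κ | ∀ τ, τ ∉ T → τ ≠ (σ ^ nn σ T β) β → 0 ≤ LTf σ p T β τ κ}

/-- `i_T : ℚ^𝔹 → ℚ^{𝔹−T}`, the linear map with `i_T(e_β) = 0` if `T_𝔭 = 𝔹_𝔭` and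
`i_T(e_β) = (−p)^{ν_β} e_{σ^{−ν_β}β}` otherwise. -/
def iT (σ : Equiv.Perm B) (p : ℕ) (T : Set B) (κ : B → ℚ) : {β : B // β ∉ T} → ℚ :=
  fun β₀ => ∑ β : B, κ β *
    (if orbit σ β ⊆ T then 0
     else if (σ⁻¹ ^ nu σ T β) β = β₀.1 then (-(p : ℚ)) ^ nu σ T β else 0)

/-- Restriction to `ℚ^{𝔹−T}` of a vector of `ℚ^𝔹` (used for vectors supported on `𝔹 − T`). -/
def res (T : Set B) (v : B → ℚ) : {β : B // β ∉ T} → ℚ := fun β => v β.1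

/-- The generating set `𝒢^{T-red}(T) = ⋃_𝔭 𝒢_𝔭^{T-red}(T)` of the reduced cone. -/
def Gred (σ : Equiv.Perm B) (p : ℕ) (T : Set B) : Set ({β : B // β ∉ T} → ℚ) :=
  {v | ∃ β, β ∉ tilde σ T ∧ v = res T (fH σ p T β)}
  ∪ {v | ∃ β, β ∈ tilde σ T ∧ β ∉ T ∧ ¬ orbit σ β ⊆ tilde σ T ∧ v = res T (-(fB σ p T β))}
  ∪ {v | ∃ β, β ∉ T ∧ orbit σ β ⊆ tilde σ T ∧ v = res T (-(e β))}

/-- The minimal cone `𝒞^min_T = i_T(𝒟_T ∩ ⋂_{β ∈ 𝔹(T)} 𝒟_{T,f_β}) ⊆ ℚ^{𝔹−T}`. -/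
def Cmin (σ : Equiv.Perm B) (p : ℕ) (T : Set B) : Set ({β : B // β ∉ T} → ℚ) :=
  iT σ p T '' (D σ p T ∩ {κ | ∀ β ∈ BT σ T, κ ∈ Df σ p T β})

/-- `g_β`: `b_β` if `β ∈ T_𝔭`; `−e_β` if `β ∈ T̃_𝔭 − T_𝔭` and `𝔹_𝔭 = T̃_𝔭`;
`−b_{σ^{n_β}β}^β` if `β ∈ T̃_𝔭 − T_𝔭` and `𝔹_𝔭 ≠ T̃_𝔭`; `h_{σ^{n_β}β}^β` if `β ∈ 𝔹_𝔭 − T̃_𝔭`. -/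
def gvec (σ : Equiv.Perm B) (p : ℕ) (T : Set B) (β : B) : B → ℚ :=
  if β ∈ T then bsimple σ p β
  else if orbit σ β ⊆ tilde σ T then -(e β)
  else if β ∈ tilde σ T then -(fB σ p T β)
  else fH σ p T β

/-- The map `σ̄ : β ↦ σ^{n_β} β`. -/
def sigbar (σ : Equiv.Perm B) (T : Set B) (β : B) : B := (σ ^ nn σ T β) β

/-- `h_β = -e_β + p e_{σ⁻¹β}` as an element of `ℤ^𝔹`. -/
def hZ (σ : Equiv.Perm B) (p : ℕ) (β : B) : B → ℤ :=
  fun τ => (if τ = β then -1 else 0) + (if τ = σ⁻¹ β then (p : ℤ) else 0)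

end GO

end




namespace GO

section helpers

variable {B : Type*} [Fintype B] [DecidableEq B]

theorem cone_zero {V : Type*} [AddCommMonoid V] [Module ℚ V] (S : Set V) : (0 : V) ∈ cone S :=
  ⟨0, fun _ => 0, fun _ => 0, fun _ => le_rfl, fun i => i.elim0, by simp⟩

theorem cone_gen {V : Type*} [AddCommMonoid V] [Module ℚ V] {S : Set V} {v : V} (h : v ∈ S) :
    v ∈ cone S :=
  ⟨1, fun _ => 1, fun _ => v, fun _ => zero_le_one, fun _ => h, by simp⟩

theorem cone_smul {V : Type*} [AddCommMonoid V] [Module ℚ V] {S : Set V} {v : V} (h : v ∈ cone S)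
    {c : ℚ} (hc : 0 ≤ c) : c • v ∈ cone S := by
  obtain ⟨n, a, w, ha, hw, rfl⟩ := h
  exact ⟨n, fun i => c * a i, w, fun i => mul_nonneg hc (ha i), hw, by
    simp [Finset.smul_sum, mul_smul]⟩

theorem cone_add {V : Type*} [AddCommMonoid V] [Module ℚ V] {S : Set V} {v w : V}
    (h : v ∈ cone S) (h' : w ∈ cone S) : v + w ∈ cone S := by
  obtain ⟨n, a, x, ha, hx, rfl⟩ := h
  obtain ⟨m, b, y, hb, hy, rfl⟩ := h'
  refine ⟨n + m, Fin.append a b, Fin.append x y, ?_, ?_, ?_⟩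
  · intro i
    refine Fin.addCases (fun j => ?_) (fun j => ?_) i
    · simpa using ha j
    · simpa using hb j
  · intro i
    refine Fin.addCases (fun j => ?_) (fun j => ?_) i
    · simpa using hx j
    · simpa using hy j
  · simp [Fin.sum_univ_add]

theorem cone_sum {V ι : Type*} [AddCommMonoid V] [Module ℚ V] {S : Set V} (s : Finset ι)
    (f : ι → V) (h : ∀ i ∈ s, f i ∈ cone S) : ∑ i ∈ s, f i ∈ cone S := by
  induction s using Finset.induction_on with
  | empty => simpa using cone_zero S
  | insert a s ha ih =>
    rw [Finset.sum_insert ha]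
    exact cone_add (h a (by simp)) (ih fun i hi => h i (by simp [hi]))

theorem sameOrbit_iff (σ : Equiv.Perm B) (x y : B) : sameOrbit σ x y ↔ σ.SameCycle x y := by
  constructor
  · rintro ⟨n, hn⟩
    exact ⟨n, by simpa using hn⟩
  · intro h
    exact h.exists_nat_pow_eq

theorem mem_orbit (σ : Equiv.Perm B) (x y : B) : y ∈ orbit σ x ↔ σ.SameCycle x y :=
  sameOrbit_iff σ x y

theorem orbit_inv_pow (σ : Equiv.Perm B) (x y : B) (n : ℕ) :
    (σ⁻¹ ^ n) y ∈ orbit σ x ↔ y ∈ orbit σ x := by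
  rw [mem_orbit, mem_orbit, ← zpow_natCast, inv_zpow', Equiv.Perm.sameCycle_zpow_right]

theorem orbit_pow (σ : Equiv.Perm B) (x y : B) (n : ℕ) :
    (σ ^ n) y ∈ orbit σ x ↔ y ∈ orbit σ x := by
  rw [mem_orbit, mem_orbit, Equiv.Perm.sameCycle_pow_right]

theorem orbit_inv1 (σ : Equiv.Perm B) (x y : B) : σ⁻¹ y ∈ orbit σ x ↔ y ∈ orbit σ x := by
  simpa using orbit_inv_pow σ x y 1

theorem orbit_app (σ : Equiv.Perm B) (x y : B) : σ y ∈ orbit σ x ↔ y ∈ orbit σ x := by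
  simpa using orbit_pow σ x y 1

theorem tilde_local (σ : Equiv.Perm B) (b : B) (T T' : Set B)
    (h : ∀ x, x ∉ orbit σ b → (x ∈ T ↔ x ∈ T')) (x : B) (hx : x ∉ orbit σ b)
    (hxT : x ∈ tilde σ T) : x ∈ tilde σ T' := by
  rcases hxT with hxT | hxT
  · exact Or.inl ((h x hx).1 hxT)
  · right
    simp only [Set.mem_iUnion] at hxT ⊢
    obtain ⟨C, ⟨γ, m, h1, h2, h3, hC⟩, hxC⟩ := hxT
    refine ⟨C, ⟨γ, m, ?_⟩, hxC⟩
    have hγ : γ ∉ orbit σ b := by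
      intro hγ
      apply hx
      have hCs : ∀ y ∈ C, y ∈ orbit σ b := by
        rw [hC]
        rintro y ⟨i, _, rfl⟩
        exact (orbit_inv_pow σ b γ i).2 hγ
      unfold chainExt at hxC
      split_ifs at hxC
      · rcases hxC with hxC | ⟨y, hy, rfl⟩
        · exact hCs x hxC
        · exact (orbit_inv1 σ b y).2 (hCs y hy)
      · exact hCs x hxC
    refine ⟨?_, ?_, ?_, hC⟩
    · rwa [← h _ (by rwa [orbit_app])]
    · rwa [← h _ (by rwa [orbit_inv_pow])]
    · intro i hi
      rw [← h _ (by rwa [orbit_inv_pow])]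
      exact h3 i hi

/-- the segment above a point of `T̃ - T`. -/
theorem seg (σ : Equiv.Perm B) (T : Set B) (β : B) (hβ : β ∉ T) (ht : β ∈ tilde σ T) :
    ∃ m : ℕ, Even m ∧ (σ ^ (m + 2)) β ∉ T ∧ ∀ i, 0 < i → i < m + 2 → (σ ^ i) β ∈ T := by
  rcases ht with ht | ht
  · exact absurd ht hβ
  simp only [Set.mem_iUnion] at ht
  obtain ⟨C, ⟨γ, m, h1, h2, h3, hC⟩, hxC⟩ := ht
  have hCT : ∀ y ∈ C, y ∈ T := by
    rw [hC]
    rintro y ⟨i, hi, rfl⟩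
    exact h3 i hi
  have key : ∀ i j, i < j → j ≤ m → (σ⁻¹ ^ i) γ ≠ (σ⁻¹ ^ j) γ := by
    intro i j hij hj heq
    obtain ⟨d, rfl⟩ : ∃ d, j = i + (d + 1) := ⟨j - i - 1, by omega⟩
    rw [pow_add, Equiv.Perm.mul_apply] at heq
    have h4 := (σ⁻¹ ^ i).injective heq
    apply h1
    rw [h4, pow_succ', Equiv.Perm.mul_apply]
    simpa using h3 d (by omega)
  have hcard : C.ncard = m + 1 := by
    have : C = (fun i => (σ⁻¹ ^ i) γ) '' (Set.Iic m) := by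
      rw [hC]; ext y; simp [eq_comm]
    rw [this, Set.InjOn.ncard_image]
    · rw [← Finset.coe_Iic, Set.ncard_coe_finset]; simp
    · intro i hi j hj hij
      simp only [Set.mem_Iic] at hi hj
      rcases lt_trichotomy i j with h | h | h
      · exact absurd hij (key i j h hj)
      · exact h
      · exact absurd hij.symm (key j i h hi)
  unfold chainExt at hxC
  rw [hcard] at hxC
  split_ifs at hxC with hodd
  · rcases hxC with hxC | ⟨y, hy, rfl⟩
    · exact absurd (hCT _ hxC) hβ
    · rw [hC] at hy
      obtain ⟨i, hi, rfl⟩ := hy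
      have him : i = m := by
        by_contra hne
        apply hβ
        have := h3 (i + 1) (by omega)
        rwa [pow_succ', Equiv.Perm.mul_apply] at this
      subst him
      have e1 : ∀ a b : ℕ, (σ ^ a) ((σ⁻¹ ^ (a + b)) γ) = (σ⁻¹ ^ b) γ := by
        intro a b
        rw [pow_add, Equiv.Perm.mul_apply, inv_pow]
        simp
      rw [← Equiv.Perm.mul_apply, ← pow_succ']
      refine ⟨i, by
        rcases Nat.even_or_odd i with h | h
        · exact h
        · exact absurd hodd (by simpa using h.add_one), ?_, ?_⟩
      · rw [show i + 2 = 1 + (i + 1) by omega, pow_add, Equiv.Perm.mul_apply]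
        have := e1 (i + 1) 0
        simp only [add_zero, pow_zero, Equiv.Perm.one_apply] at this
        rw [this]
        simpa using h1
      · intro j hj hj2
        obtain ⟨k, hk⟩ : ∃ k, i + 1 = j + k := ⟨i + 1 - j, by omega⟩
        rw [hk, e1]
        exact h3 k (by omega)
  · exact absurd (hCT _ hxC) hβ

theorem mu_seg (σ : Equiv.Perm B) (T : Set B) (β : B) (hβ : β ∉ T) (n i : ℕ) (hi : i < n)
    (h1 : (σ ^ n) β ∉ T) (h2 : ∀ j, 0 < j → j < n → (σ ^ j) β ∈ T) :
    mu σ T ((σ ^ i) β) = n - i := by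
  have hno : ¬ orbit σ ((σ ^ i) β) ⊆ T := by
    intro h
    apply hβ
    apply h
    rw [mem_orbit]
    exact (Equiv.Perm.sameCycle_pow_left).2 (Equiv.Perm.SameCycle.refl σ β)
  unfold mu
  rw [if_neg hno]
  apply le_antisymm
  · apply Nat.sInf_le
    refine ⟨by omega, ?_⟩
    rw [← Equiv.Perm.mul_apply, ← pow_add, Nat.sub_add_cancel hi.le]
    exact h1
  · apply le_csInf
    · refine ⟨n - i, by omega, ?_⟩
      rw [← Equiv.Perm.mul_apply, ← pow_add, Nat.sub_add_cancel hi.le]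
      exact h1
    · rintro k ⟨hk, hk2⟩
      by_contra hlt
      apply hk2
      rw [← Equiv.Perm.mul_apply, ← pow_add]
      exact h2 _ (by omega) (by omega)

theorem LT_eq (σ : Equiv.Perm B) (p : ℕ) (T : Set B) (β : B) (hβ : β ∉ T)
    (ht : orbit σ β ⊆ tilde σ T) (m : ℕ) (hm : Even m) (h1 : (σ ^ (m + 2)) β ∉ T)
    (h2 : ∀ i, 0 < i → i < m + 2 → (σ ^ i) β ∈ T) (κ : B → ℚ) :
    LT σ p T β κ = - ∑ i ∈ Finset.range (m + 2), (-(p : ℚ)) ^ i * κ ((σ ^ i) β) := by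
  have hmem : ∀ i, (σ ^ i) β ∈ orbit σ β := fun i => ⟨i, rfl⟩
  have hmu : mu σ T β = m + 2 := by
    simpa using mu_seg σ T β hβ (m + 2) 0 (by omega) h1 h2
  unfold LT
  rw [if_pos (ht (by simpa using hmem 0)), hmu]
  unfold Lfun
  have hs : steps0 σ β ((σ ^ (m + 2 - 1)) β) = m + 1 := by
    unfold steps0
    apply le_antisymm
    · exact Nat.sInf_le rfl
    · apply le_csInf (s := {n | (σ ^ n) β = (σ ^ (m + 2 - 1)) β}) ⟨m + 1, rfl⟩
      intro k hk
      by_contra hlt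
      obtain ⟨d, hd⟩ : ∃ d, m + 1 = k + (d + 1) := ⟨m - k, by omega⟩
      simp only [Set.mem_setOf_eq, show m + 2 - 1 = m + 1 by omega] at hk
      rw [hd, pow_add, Equiv.Perm.mul_apply] at hk
      have h3 := (σ ^ k).injective hk
      apply hβ
      rw [h3]
      exact h2 _ (by omega) (by omega)
  rw [hs, ← Finset.sum_neg_distrib]
  apply Finset.sum_congr rfl
  intro i hi
  rw [Finset.mem_range] at hi
  have heps : epsT σ T ((σ ^ i) β) = - (-1 : ℚ) ^ i := by
    unfold epsT
    rw [if_neg, if_pos (ht (hmem i)), mu_seg σ T β hβ (m + 2) i (by omega) h1 h2]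
    · have h5 : (-1 : ℚ) ^ (m + 2 - i - 1) * (-1 : ℚ) ^ i = -1 := by
        rw [← pow_add, show m + 2 - i - 1 + i = m + 1 by omega]
        exact hm.add_one.neg_one_pow
      have h6 : (-1 : ℚ) ^ i * (-1 : ℚ) ^ i = 1 := by
        rw [← mul_pow]; simp
      linear_combination (-1 : ℚ) ^ i * h5 - (-1 : ℚ) ^ (m + 2 - i - 1) * h6
    · intro h
      apply hβ
      apply h
      rw [mem_orbit]
      exact (Equiv.Perm.sameCycle_pow_left).2 (Equiv.Perm.SameCycle.refl σ β)
  rw [heps, neg_pow (p : ℚ) i]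
  ring

theorem span_sub_D (σ : Equiv.Perm B) (p : ℕ) (T : Set B) (v : B → ℚ)
    (hv : v ∈ Submodule.span ℚ {v | ∃ β ∈ T, v = bsimple σ p β}) : v ∈ D σ p T := by
  suffices h : v ∈ D σ p T ∧ -v ∈ D σ p T from h.1
  induction hv using Submodule.span_induction with
  | mem x hx =>
    obtain ⟨β, hβ, rfl⟩ := hx
    exact ⟨cone_gen (Or.inr ⟨β, hβ, Or.inl rfl⟩), cone_gen (Or.inr ⟨β, hβ, Or.inr rfl⟩)⟩
  | zero => exact ⟨cone_zero _, by rw [neg_zero]; exact cone_zero _⟩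
  | add x y _ _ hx hy => exact ⟨cone_add hx.1 hy.1, by rw [neg_add]; exact cone_add hx.2 hy.2⟩
  | smul a x _ hx =>
    rcases le_total 0 a with ha | ha
    · exact ⟨cone_smul hx.1 ha, by rw [← smul_neg]; exact cone_smul hx.2 ha⟩
    · refine ⟨?_, ?_⟩
      · rw [← neg_smul_neg]; exact cone_smul hx.2 (neg_nonneg.2 ha)
      · rw [← neg_smul]; exact cone_smul hx.1 (neg_nonneg.2 ha)

theorem neg_e_mem (σ : Equiv.Perm B) (p : ℕ) (T : Set B) (β : B) (hβ : β ∉ T)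
    (ht : β ∈ tilde σ T) (hσ : σ β ∈ T) : -(e β) ∈ D σ p T := by
  have hv : hvec σ p β (σ β) ∈ D σ p T :=
    cone_gen (Or.inl ⟨β, σ β, hβ, Or.inr ⟨β, ⟨ht, hβ⟩, rfl⟩, ⟨1, by simp⟩, rfl⟩)
  have hb : -(bsimple σ p (σ β)) ∈ D σ p T := cone_gen (Or.inr ⟨σ β, hσ, Or.inr rfl⟩)
  set n := steps σ (σ β) β with hn
  have hpos : (0 : ℚ) < 1 + (p : ℚ) ^ (n + 1) := by positivity
  have : -(e β) = (1 + (p : ℚ) ^ (n + 1))⁻¹ •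
      (hvec σ p β (σ β) + (p : ℚ) ^ n • -(bsimple σ p (σ β))) := by
    rw [eq_inv_smul_iff₀ hpos.ne']
    unfold hvec bsimple
    rw [← hn]
    have h0 : σ⁻¹ (σ β) = β := by simp
    rw [h0]
    funext τ
    simp only [Pi.add_apply, Pi.smul_apply, Pi.neg_apply, smul_eq_mul]
    ring
  rw [this]
  exact cone_smul (cone_add hv (cone_smul hb (by positivity))) (by positivity)

theorem W_mem (σ : Equiv.Perm B) (p : ℕ) (T : Set B) (β : B) (hβ : β ∉ T)
    (ht : orbit σ β ⊆ tilde σ T) (m : ℕ) (hm : Even m) (h1 : (σ ^ (m + 2)) β ∉ T)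
    (h2 : ∀ i, 0 < i → i < m + 2 → (σ ^ i) β ∈ T) (κ : B → ℚ) (hL : 0 ≤ LT σ p T β κ) :
    ∑ i ∈ Finset.range (m + 2), κ ((σ ^ i) β) • e ((σ ^ i) β) ∈ D σ p T := by
  set N := Submodule.span ℚ {v | ∃ β ∈ T, v = bsimple σ p β} with hN
  have hmod : ∀ i, i < m + 2 → e ((σ ^ i) β) - (-(p : ℚ)) ^ i • e β ∈ N := by
    intro i
    induction i with
    | zero => intro _; simp
    | succ i ih =>
      intro hi
      have hb : bsimple σ p ((σ ^ (i + 1)) β) ∈ N :=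
        Submodule.subset_span ⟨_, h2 (i + 1) (by omega) hi, rfl⟩
      have : e ((σ ^ (i + 1)) β) - (-(p : ℚ)) ^ (i + 1) • e β =
          bsimple σ p ((σ ^ (i + 1)) β) + (-(p : ℚ)) • (e ((σ ^ i) β) - (-(p : ℚ)) ^ i • e β) := by
        unfold bsimple
        have h3 : σ⁻¹ ((σ ^ (i + 1)) β) = (σ ^ i) β := by
          rw [pow_succ', Equiv.Perm.mul_apply]; simp
        rw [h3]
        funext τ
        simp only [Pi.add_apply, Pi.sub_apply, Pi.smul_apply, smul_eq_mul]
        ring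
      rw [this]
      exact N.add_mem hb (N.smul_mem _ (ih (by omega)))
  have hsum : ∑ i ∈ Finset.range (m + 2), κ ((σ ^ i) β) • e ((σ ^ i) β) =
      LT σ p T β κ • (-(e β)) +
      ∑ i ∈ Finset.range (m + 2), κ ((σ ^ i) β) • (e ((σ ^ i) β) - (-(p : ℚ)) ^ i • e β) := by
    rw [LT_eq σ p T β hβ ht m hm h1 h2 κ, neg_smul_neg, Finset.sum_smul, ← Finset.sum_add_distrib]
    apply Finset.sum_congr rfl
    intro i _
    funext τ
    simp only [Pi.add_apply, Pi.sub_apply, Pi.smul_apply, smul_eq_mul]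
    ring
  rw [hsum]
  apply cone_add
  · refine cone_smul (neg_e_mem σ p T β hβ (ht ⟨0, rfl⟩) ?_) hL
    simpa using h2 1 (by omega) (by omega)
  · apply span_sub_D
    apply N.sum_mem
    intro i hi
    exact N.smul_mem _ (hmod i (Finset.mem_range.1 hi))

/-- Restriction to the complement of `P`. -/
noncomputable def rst (P : Set B) (v : B → ℚ) : B → ℚ := fun τ => if τ ∈ P then 0 else v τ

theorem e_off (x τ : B) (h : τ ≠ x) : e x τ = 0 := by simp [e, h]

theorem rst_gen (σ : Equiv.Perm B) (p : ℕ) (T : Set B) (b : B) (v : B → ℚ)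
    (hv : v ∈ Dgen σ p (T ∪ {b})) : rst (orbit σ b) v ∈ D σ p T := by
  have hb : b ∈ orbit σ b := ⟨0, rfl⟩
  have hag : ∀ x, x ∉ orbit σ b → (x ∈ T ↔ x ∈ T ∪ {b}) := by
    intro x hx
    have : x ≠ b := fun h => hx (h ▸ hb)
    simp [this]
  -- vectors supported at two points
  have gen1 : ∀ x y : B, ∀ a c : ℚ, x ∈ orbit σ b → y ∈ orbit σ b →
      rst (orbit σ b) (a • e x + c • e y) = 0 := by
    intro x y a c hx hy
    funext τ
    unfold rst
    split_ifs with hτ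
    · rfl
    · have h1 : τ ≠ x := fun h => hτ (h ▸ hx)
      have h2 : τ ≠ y := fun h => hτ (h ▸ hy)
      simp [e_off _ _ h1, e_off _ _ h2]
  have gen2 : ∀ x y : B, ∀ a c : ℚ, x ∉ orbit σ b → y ∉ orbit σ b →
      rst (orbit σ b) (a • e x + c • e y) = a • e x + c • e y := by
    intro x y a c hx hy
    funext τ
    unfold rst
    split_ifs with hτ
    · have h1 : τ ≠ x := fun h => hx (h ▸ hτ)
      have h2 : τ ≠ y := fun h => hy (h ▸ hτ)
      simp [e_off _ _ h1, e_off _ _ h2]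
    · rfl
  rcases hv with ⟨β, β', hβ, hβ', hs, rfl⟩ | ⟨β, hβ, hv⟩
  · have e1 : hvec σ p β β' = (-1 : ℚ) • e β + ((p : ℚ) ^ steps σ β' β) • e β' := by
      simp [hvec]
    rw [sameOrbit_iff] at hs
    have hiff : β' ∈ orbit σ b ↔ β ∈ orbit σ b := by
      rw [mem_orbit, mem_orbit]
      exact ⟨fun h => h.trans hs.symm, fun h => h.trans hs⟩
    by_cases ho : β ∈ orbit σ b
    · rw [e1, gen1 _ _ _ _ ho (hiff.2 ho)]
      exact cone_zero _
    · have ho' : β' ∉ orbit σ b := fun h => ho (hiff.1 h)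
      rw [e1, gen2 _ _ _ _ ho ho', ← e1]
      refine cone_gen (Or.inl ⟨β, β', fun h => hβ (Or.inl h), ?_, (sameOrbit_iff _ _ _).2 hs, rfl⟩)
      rcases hβ' with h | ⟨γ, ⟨hγ, hγ2⟩, rfl⟩
      · exact Or.inl fun h' => h (tilde_local σ b _ _ hag _ ho' h')
      · have hoγ : γ ∉ orbit σ b := by rwa [orbit_app] at ho'
        exact Or.inr ⟨γ, ⟨tilde_local σ b _ _ (fun x hx => (hag x hx).symm) _ hoγ hγ,
          fun h => hγ2 (Or.inl h)⟩, rfl⟩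
  · by_cases ho : β ∈ orbit σ b
    · have ho' := (orbit_inv1 σ b β).2 ho
      have : rst (orbit σ b) v = 0 := by
        rcases hv with rfl | rfl
        · rw [← gen1 β (σ⁻¹ β) 1 p ho ho']; simp [bsimple]
        · rw [← gen1 β (σ⁻¹ β) (-1) (-p) ho ho']; simp [bsimple, add_comm]
      rw [this]
      exact cone_zero _
    · have ho' := fun h => ho ((orbit_inv1 σ b β).1 h)
      have : rst (orbit σ b) v = v := by
        rcases hv with rfl | rfl
        · have := gen2 β (σ⁻¹ β) 1 p ho ho'
          simpa [bsimple] using this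
        · have := gen2 β (σ⁻¹ β) (-1) (-p) ho ho'
          simpa [bsimple, add_comm] using this
      rw [this]
      exact cone_gen (Or.inr ⟨β, (hag β ho).2 hβ, hv⟩)

theorem rst_D (σ : Equiv.Perm B) (p : ℕ) (T : Set B) (b : B) (v : B → ℚ)
    (hv : v ∈ D σ p (T ∪ {b})) : rst (orbit σ b) v ∈ D σ p T := by
  obtain ⟨n, c, w, hc, hw, rfl⟩ := hv
  have : rst (orbit σ b) (∑ i, c i • w i) = ∑ i, c i • rst (orbit σ b) (w i) := by
    funext τ
    simp only [rst, Finset.sum_apply, Pi.smul_apply, smul_eq_mul]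
    split_ifs <;> simp
  rw [this]
  exact cone_sum _ _ fun i _ => cone_smul (rst_gen σ p T b _ (hw i)) (hc i)

theorem decomp (σ : Equiv.Perm B) (T : Set B) (b : B) (hb : b ∉ T) (m : B → ℕ)
    (h1 : ∀ β ∈ orbit σ b \ T, (σ ^ (m β + 2)) β ∉ T)
    (h2 : ∀ β ∈ orbit σ b \ T, ∀ i, 0 < i → i < m β + 2 → (σ ^ i) β ∈ T) (f : B → (B → ℚ)) :
    ∑ τ ∈ Finset.univ.filter (· ∈ orbit σ b), f τ =
    ∑ β ∈ Finset.univ.filter (· ∈ orbit σ b \ T), ∑ i ∈ Finset.range (m β + 2),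
      f ((σ ^ i) β) := by
  rw [Finset.sum_sigma']
  symm
  refine Finset.sum_bij (fun x _ => (σ ^ x.2) x.1) ?_ ?_ ?_ ?_
  · rintro ⟨β, i⟩ hx
    simp only [Finset.mem_sigma, Finset.mem_filter, Finset.mem_univ, true_and] at hx ⊢
    exact (orbit_pow σ b β i).2 hx.1.1
  · have key : ∀ β β' : B, ∀ i j : ℕ, β ∈ orbit σ b \ T → β' ∈ orbit σ b \ T → j < m β' + 2 →
        i ≤ j → (σ ^ i) β = (σ ^ j) β' → β = β' ∧ i = j := by
      intro β β' i j hβ hβ' hj hij heq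
      obtain ⟨d, rfl⟩ : ∃ d, j = i + d := ⟨j - i, by omega⟩
      rw [pow_add, Equiv.Perm.mul_apply] at heq
      have h3 := (σ ^ i).injective heq
      rcases Nat.eq_zero_or_pos d with rfl | hd
      · exact ⟨by simpa using h3, rfl⟩
      · exact absurd (h3 ▸ h2 β' hβ' d hd (by omega)) hβ.2
    rintro ⟨β, i⟩ hx ⟨β', j⟩ hy heq
    simp only [Finset.mem_sigma, Finset.mem_filter, Finset.mem_univ, true_and,
      Finset.mem_range] at hx hy heq
    rcases le_total i j with h | h
    · obtain ⟨rfl, rfl⟩ := key β β' i j hx.1 hy.1 hy.2 h heq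
      rfl
    · obtain ⟨rfl, rfl⟩ := key β' β j i hy.1 hx.1 hx.2 h heq.symm
      rfl
  · intro τ hτ
    simp only [Finset.mem_filter, Finset.mem_univ, true_and] at hτ
    have hex : ∃ n, (σ⁻¹ ^ n) τ ∉ T := by
      obtain ⟨n, hn⟩ := hτ
      refine ⟨n, ?_⟩
      rw [← hn, inv_pow]
      simpa using hb
    set n := Nat.find hex with hn
    have hn1 := Nat.find_spec hex
    rw [← hn] at hn1
    have hc : ∀ i k, (σ ^ i) ((σ⁻¹ ^ (i + k)) τ) = (σ⁻¹ ^ k) τ := by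
      intro a b
      rw [pow_add, Equiv.Perm.mul_apply, inv_pow]
      simp
    have hmem : (σ⁻¹ ^ n) τ ∈ orbit σ b \ T := ⟨(orbit_inv_pow σ b τ n).2 hτ, hn1⟩
    refine ⟨⟨(σ⁻¹ ^ n) τ, n⟩, ?_, ?_⟩
    · simp only [Finset.mem_sigma, Finset.mem_filter, Finset.mem_univ, true_and, Finset.mem_range]
      refine ⟨hmem, ?_⟩
      by_contra hlt
      obtain ⟨k, hk⟩ : ∃ k, n = m ((σ⁻¹ ^ n) τ) + 2 + k := ⟨n - (m ((σ⁻¹ ^ n) τ) + 2), by omega⟩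
      have h3 := h1 _ hmem
      have h4 := hc (m ((σ⁻¹ ^ n) τ) + 2) k
      rw [← hk] at h4
      rw [h4] at h3
      exact Nat.find_min hex (by omega : k < Nat.find hex) h3
    · simpa using hc n 0
  · intro _ _
    rfl

end helpers

end GO

/-- let `𝔹_𝔭` be an orbit with `T_𝔭 ≠ 𝔹_𝔭` and `T̃_𝔭 = 𝔹_𝔭`, take
`β₁ ∈ T̃_𝔭 − T_𝔭` and `T′ = T ∪ {β₁}`.  Then every `κ ∈ 𝒟_{T′} + ℚ^{≥0}·h_{β₁}` with
`L_{T,β_i}(κ) ≥ 0` for all `β_i ∈ T̃_𝔭 − T_𝔭` lies in `𝒟_T`. -/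
theorem statement9 {B : Type*} [Fintype B] [DecidableEq B] [Nonempty B]
    (σ : Equiv.Perm B) (p : ℕ) (hp : p.Prime) (T : Set B) (β₁ : B)
    (h₁ : β₁ ∉ T) (h₂ : GO.orbit σ β₁ ⊆ GO.tilde σ T)
    (κ : B → ℚ)
    (hκ : ∃ y ∈ GO.D σ p (T ∪ {β₁}), ∃ c : ℚ, 0 ≤ c ∧ κ = y + c • GO.hsimple σ p β₁)
    (hL : ∀ τ ∈ GO.orbit σ β₁ \ T, 0 ≤ GO.LT σ p T τ κ) :
    κ ∈ GO.D σ p T := by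
  obtain ⟨y, hy, c, hc, hκy⟩ := hκ
  have hseg : ∀ β, ∃ m : ℕ, β ∈ GO.orbit σ β₁ \ T →
      Even m ∧ (σ ^ (m + 2)) β ∉ T ∧ ∀ i, 0 < i → i < m + 2 → (σ ^ i) β ∈ T := by
    intro β
    by_cases h : β ∈ GO.orbit σ β₁ \ T
    · obtain ⟨m, hm⟩ := GO.seg σ T β h.2 (h₂ h.1)
      exact ⟨m, fun _ => hm⟩
    · exact ⟨0, fun h' => absurd h' h⟩
  choose m hm using hseg
  have horb : ∀ β ∈ GO.orbit σ β₁, GO.orbit σ β ⊆ GO.tilde σ T := by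
    intro β hβ τ hτ
    apply h₂
    rw [GO.mem_orbit] at *
    exact hβ.trans hτ
  have hsplit : κ = GO.rst (GO.orbit σ β₁) y +
      ∑ τ ∈ Finset.univ.filter (· ∈ GO.orbit σ β₁), κ τ • GO.e τ := by
    funext x
    have hb : β₁ ∈ GO.orbit σ β₁ := ⟨0, rfl⟩
    simp only [Pi.add_apply, Finset.sum_apply, Pi.smul_apply, smul_eq_mul, GO.rst, GO.e,
      mul_ite, mul_one, mul_zero, Finset.sum_ite_eq, Finset.mem_filter, Finset.mem_univ, true_and]
    split_ifs with hx
    · simp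
    · have e1 : x ≠ β₁ := fun h => hx (h ▸ hb)
      have e2 : x ≠ σ⁻¹ β₁ := fun h => hx (h ▸ (GO.orbit_inv1 σ β₁ β₁).2 hb)
      rw [hκy]
      simp only [GO.hsimple, Pi.add_apply, Pi.smul_apply, Pi.neg_apply, GO.e_off _ _ e1,
        GO.e_off _ _ e2]
      simp
  rw [hsplit, GO.decomp σ T β₁ h₁ m (fun β hβ => (hm β hβ).2.1) (fun β hβ => (hm β hβ).2.2)]
  refine GO.cone_add (GO.rst_D σ p T β₁ y hy) (GO.cone_sum _ _ fun β hβ => ?_)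
  simp only [Finset.mem_filter, Finset.mem_univ, true_and] at hβ
  exact GO.W_mem σ p T β hβ.2 (horb β hβ.1) (m β) (hm β hβ).1 (hm β hβ).2.1 (hm β hβ).2.2 κ
    (hL β hβ)
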